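/- arXiv:1907.07447 — 2 statements merged into one kernel-verified Lean document; each statement's English description precedes it below -/
import Mathlib

section
/- Let P(·,n) be the monic MVOPs of the Hermite-type weight W(x) = e^{−x²}L(x)L(x)*, with recurrence coefficients B(n), C(n). Then for every n ≥ 1 and every x ∈ ℝ, P(x,n)(J − xA + ½A²) = −A P(x,n+1) + (nI + J − 2C(n) − A B(n) + ½A²) P(x,n) + (C(n)A − 2C(n)B(n−1)) P(x,n−1); i.e. the Casimir operator of the harmonic oscillator algebra corresponds under the generalized Fourier map to this second order difference operator acting on the degree variable. -/
open MeasureTheory Matrix Finset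
open scoped ComplexOrder

/-- The physicists' Hermite polynomials, as functions on `ℝ`:
`H_0 = 1`, `H_1(x) = 2x`, `H_{m+1}(x) = 2x H_m(x) − 2m H_{m−1}(x)`. -/
noncomputable def hermiteF : ℕ → ℝ → ℝ
  | 0, _ => 1
  | 1, x => 2 * x
  | (m + 2), x => 2 * x * hermiteF (m + 1) x - 2 * (m + 1) * hermiteF m x

/-- Entrywise integral of a matrix-valued function on `ℝ`. -/
noncomputable def matInt (N : ℕ) (F : ℝ → Matrix (Fin N) (Fin N) ℂ) :
    Matrix (Fin N) (Fin N) ℂ :=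
  Matrix.of fun i j => ∫ y : ℝ, F y i j

/-- Entrywise derivative of a matrix-valued function on `ℝ`. -/
noncomputable def matDeriv (N : ℕ) (F : ℝ → Matrix (Fin N) (Fin N) ℂ) (x : ℝ) :
    Matrix (Fin N) (Fin N) ℂ :=
  Matrix.of fun i j => deriv (fun y => F y i j) x

/-- `F` is a matrix polynomial of degree `n` with leading coefficient the identity. -/
def IsMonicMatPoly (N n : ℕ) (F : ℝ → Matrix (Fin N) (Fin N) ℂ) : Prop :=
  ∃ c : ℕ → Matrix (Fin N) (Fin N) ℂ, c n = 1 ∧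
    ∀ x : ℝ, F x = ∑ k ∈ Finset.range (n + 1), ((x : ℂ) ^ k) • c k

/-- The matrix-valued inner product `⟨H, G⟩ = ∫ H(y) W(y) G(y)* dy`. -/
noncomputable def matIP (N : ℕ) (W H G : ℝ → Matrix (Fin N) (Fin N) ℂ) :
    Matrix (Fin N) (Fin N) ℂ :=
  matInt N fun y => H y * W y * (G y)ᴴ

/-- The lower triangular matrix `L(x)` with entries
`L(x)_{jk} = (H_{j−k}(x)/(j−k)!)·(α_j/α_k)` for `j ≥ k` (here `0`-based indices). -/
noncomputable def Lmat (N : ℕ) (α : Fin N → ℝ) (x : ℝ) : Matrix (Fin N) (Fin N) ℂ :=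
  Matrix.of fun j k =>
    if (k : ℕ) ≤ (j : ℕ) then
      ((hermiteF ((j : ℕ) - (k : ℕ)) x / Nat.factorial ((j : ℕ) - (k : ℕ)) *
          (α j / α k) : ℝ) : ℂ)
    else 0

/-- The Hermite-type matrix weight `W(x) = e^{−x²} L(x)L(x)*`. -/
noncomputable def hermW (N : ℕ) (α : Fin N → ℝ) (x : ℝ) : Matrix (Fin N) (Fin N) ℂ :=
  Real.exp (-x ^ 2) • (Lmat N α x * (Lmat N α x)ᴴ)

/-- The nilpotent shift matrix `A` with `A_{j,j−1} = 2α_j/α_{j−1}` (1-based), i.e.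
(0-based) `A j k = 2 α_j / α_k` when `j = k + 1`. -/
noncomputable def Amat (N : ℕ) (α : Fin N → ℝ) : Matrix (Fin N) (Fin N) ℂ :=
  Matrix.of fun j k => if (j : ℕ) = (k : ℕ) + 1 then ((2 * α j / α k : ℝ) : ℂ) else 0

/-- The diagonal matrix `J = diag(1, 2, …, N)`. -/
def Jmat (N : ℕ) : Matrix (Fin N) (Fin N) ℂ :=
  Matrix.diagonal fun j => ((j : ℕ) + 1 : ℂ)

/-!
The weight enters only through two identities for `L`, which is the generating function
`exp (2xa - a²)` of the Hermite polynomials at the nilpotent matrix `a = A / 2`.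
Since `L' = A L`, the map `p ↦ p' + p A` on matrix polynomials becomes differentiation after right
multiplication by `L`, so integration by parts against `exp (-x²)` says that this map plus its
adjoint is `2x`. Since `[J, a] = a`, the polynomial `T = J - x A + A² / 2` satisfies `T L = L J`
with `J` Hermitian, so right multiplication by `T` is symmetric.

Both statements make sense for orthogonal polynomials over any star ring. The first forces
`P_n' + P_n A = A P_n + 2 C_n P_{n-1}`. By the second, `P_n T` is orthogonal to `P_m` for
`m < n - 1`; adding `A P_{n+1}` cancels its leading term, and pairing with `P_{n-1}` gives the
coefficient of `P_{n-1}`. What remains has degree at most `n` and is orthogonal to all lower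
`P_m`, hence is a multiple of `P_n`, the factor being its coefficient of `x^n`.
-/

open Polynomial

section Operators

variable {R : Type*} [Ring R]

/-- The first order operator `p ↦ p' + p a`, which lowers the degree of the orthogonal polynomials
of a Hermite-type weight up to a term in `p` itself. -/
noncomputable def loweringOp (a : R) (p : R[X]) : R[X] :=
  derivative p + p * C a

theorem natDegree_loweringOp_le (a : R) {p : R[X]} {n : ℕ} (hp : p.natDegree ≤ n) :
    (loweringOp a p).natDegree ≤ n :=
  natDegree_add_le_of_degree_le ((natDegree_derivative_le p).trans (by lia))
    ((natDegree_mul_C_le p a).trans hp)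

theorem coeff_loweringOp (a : R) (p : R[X]) (n : ℕ) :
    (loweringOp a p).coeff n = p.coeff (n + 1) * (n + 1) + p.coeff n * a := by
  rw [loweringOp, coeff_add, coeff_derivative, coeff_mul_C]

/-- The linear polynomial `k - x a`, which acts on `R[X]` by right multiplication. -/
noncomputable def casimirPoly (k a : R) : R[X] :=
  C k - X * C a

theorem natDegree_mul_casimirPoly_le (k a : R) {p : R[X]} {n : ℕ} (hp : p.natDegree ≤ n) :
    (p * casimirPoly k a).natDegree ≤ n + 1 :=
  natDegree_mul_le_of_le hp (by unfold casimirPoly; compute_degree)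

theorem coeff_succ_mul_casimirPoly (k a : R) (p : R[X]) (n : ℕ) :
    (p * casimirPoly k a).coeff (n + 1) = p.coeff (n + 1) * k - p.coeff n * a := by
  rw [casimirPoly, mul_sub, ← mul_assoc, coeff_sub, coeff_mul_C, coeff_mul_C, coeff_mul_X]

theorem coeff_sequence_of_lt (p : Polynomial.Sequence R) {m n : ℕ} (h : m < n) :
    (p m).coeff n = 0 :=
  coeff_eq_zero_of_natDegree_lt (by simpa using h)

end Operators

section Form

variable {R : Type*} [Ring R] [StarRing R]

/-- An `R`-valued form on `R[X]`, left linear in the first argument and conjugate linear in the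
second: `Φ (a • p) q = a * Φ p q` and `Φ p (a • q) = Φ p q * star a`. The second rule is
semilinearity along `star : R → Rᵐᵒᵖ`. -/
abbrev PolyForm (R : Type*) [Ring R] [StarRing R] :=
  R[X] →ₗ[R] R[X] →ₛₗ[((starRingEquiv : R ≃+* Rᵐᵒᵖ) : R →+* Rᵐᵒᵖ)] R

/-- The monic orthogonal polynomials of a form; the degree of `p n` is part of
`Polynomial.Sequence`. -/
structure IsMonicOrthogonal (Φ : PolyForm R) (p : Polynomial.Sequence R) : Prop where
  monic (n : ℕ) : (p n).Monic
  orthogonal {n m : ℕ} (h : n ≠ m) : Φ (p n) (p m) = 0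
  isUnit (n : ℕ) : IsUnit (Φ (p n) (p n))

/-- The three-term recurrence with coefficients `b` and `c`; the value `c 0` is irrelevant. -/
structure IsThreeTerm (p : Polynomial.Sequence R) (b c : ℕ → R) : Prop where
  zero : X * p 0 = p 1 + b 0 • p 0
  succ (n : ℕ) : X * p (n + 1) = p (n + 2) + b (n + 1) • p (n + 1) + c (n + 1) • p n

namespace IsMonicOrthogonal

variable {Φ : PolyForm R} {p : Polynomial.Sequence R} {q : R[X]} {n : ℕ}

theorem form_left_eq_zero_of_degree_lt (h : IsMonicOrthogonal Φ p) (hq : q.degree < n) :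
    Φ q (p n) = 0 := by
  have hle : degreeLT R n ≤ LinearMap.ker (Φ.flip (p n)) := by
    rw [← p.span_degreeLT fun i _ => by simp [(h.monic i).leadingCoeff], Submodule.span_le]
    rintro _ ⟨k, hk, rfl⟩
    exact h.orthogonal (ne_of_lt hk)
  exact hle (mem_degreeLT.2 hq)

theorem form_right_eq_zero_of_degree_lt (h : IsMonicOrthogonal Φ p) (hq : q.degree < n) :
    Φ (p n) q = 0 := by
  have hle : degreeLT R n ≤ LinearMap.ker (Φ (p n)) := by
    rw [← p.span_degreeLT fun i _ => by simp [(h.monic i).leadingCoeff], Submodule.span_le]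
    rintro _ ⟨k, hk, rfl⟩
    exact h.orthogonal (ne_of_gt hk)
  exact hle (mem_degreeLT.2 hq)

theorem coeff_self (h : IsMonicOrthogonal Φ p) (n : ℕ) : (p n).coeff n = 1 := by
  simpa using (h.monic n).coeff_natDegree

theorem degree_sub_coeff_smul_lt (h : IsMonicOrthogonal Φ p) (hq : q.natDegree ≤ n) :
    (q - q.coeff n • p n).degree < n := by
  refine (degree_lt_iff_coeff_zero _ _).2 fun k hk => ?_
  rcases hk.eq_or_lt with rfl | hk
  · simp [h.coeff_self]
  · simp [coeff_eq_zero_of_natDegree_lt (hq.trans_lt hk),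
      coeff_sequence_of_lt p hk]

theorem form_left_eq (h : IsMonicOrthogonal Φ p) (hq : q.natDegree ≤ n) :
    Φ q (p n) = q.coeff n * Φ (p n) (p n) := by
  have := h.form_left_eq_zero_of_degree_lt (h.degree_sub_coeff_smul_lt hq)
  rwa [map_sub, map_smul, LinearMap.sub_apply, LinearMap.smul_apply, smul_eq_mul,
    sub_eq_zero] at this

theorem form_right_eq (h : IsMonicOrthogonal Φ p) (hq : q.natDegree ≤ n) :
    Φ (p n) q = Φ (p n) (p n) * star (q.coeff n) := by
  have := h.form_right_eq_zero_of_degree_lt (h.degree_sub_coeff_smul_lt hq)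
  rwa [map_sub, map_smulₛₗ, sub_eq_zero] at this

theorem eq_zero_of_degree_lt (h : IsMonicOrthogonal Φ p) (hq : q.degree < n)
    (horth : ∀ k < n, Φ q (p k) = 0) : q = 0 := by
  by_contra hne
  have hlt : q.natDegree < n := (natDegree_lt_iff_degree_lt hne).2 hq
  have hlead := (h.form_left_eq le_rfl).symm.trans (horth _ hlt)
  exact hne (leadingCoeff_eq_zero.1 ((h.isUnit _).mul_left_eq_zero.1 hlead))

theorem eq_coeff_smul (h : IsMonicOrthogonal Φ p) (hq : q.natDegree ≤ n)
    (horth : ∀ k < n, Φ q (p k) = 0) : q = q.coeff n • p n := by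
  refine sub_eq_zero.1 (h.eq_zero_of_degree_lt (h.degree_sub_coeff_smul_lt hq) fun k hk => ?_)
  simp [horth k hk, h.orthogonal hk.ne']

variable {b c : ℕ → R}

theorem form_X_mul_self (h : IsMonicOrthogonal Φ p) (hrec : IsThreeTerm p b c) (n : ℕ) :
    Φ (X * p n) (p n) = b n * Φ (p n) (p n) := by
  cases n with
  | zero => simp [hrec.zero, h.orthogonal]
  | succ n => simp [hrec.succ, h.orthogonal]

theorem coeff_succ_add (h : IsMonicOrthogonal Φ p) (hrec : IsThreeTerm p b c) (n : ℕ) :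
    (p (n + 2)).coeff (n + 1) + b (n + 1) = (p (n + 1)).coeff n := by
  have hcoeff := congrArg (coeff · (n + 1)) (hrec.succ n)
  simpa [coeff_X_mul, h.coeff_self, coeff_sequence_of_lt p] using hcoeff.symm

variable {a k : R}

theorem coeff_loweringOp_self (h : IsMonicOrthogonal Φ p) (a : R) (n : ℕ) :
    (loweringOp a (p n)).coeff n = a := by
  simp [coeff_loweringOp, h.coeff_self, coeff_sequence_of_lt p]

theorem mul_form_add_form_mul_star (h : IsMonicOrthogonal Φ p) (hrec : IsThreeTerm p b c)
    (hparts : ∀ q r, Φ (loweringOp a q) r + Φ q (loweringOp a r) = 2 * Φ (X * q) r) (n : ℕ) :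
    a * Φ (p n) (p n) + Φ (p n) (p n) * star a = 2 * b n * Φ (p n) (p n) := by
  have hdeg := natDegree_loweringOp_le a (p.natDegree_eq n).le
  have := hparts (p n) (p n)
  rwa [h.form_left_eq hdeg, h.form_right_eq hdeg, h.coeff_loweringOp_self,
    h.form_X_mul_self hrec, ← mul_assoc] at this

theorem loweringOp_succ (h : IsMonicOrthogonal Φ p) (hrec : IsThreeTerm p b c)
    (hparts : ∀ q r, Φ (loweringOp a q) r + Φ q (loweringOp a r) = 2 * Φ (X * q) r) (n : ℕ) :
    loweringOp a (p (n + 1)) = a • p (n + 1) + (2 * c (n + 1)) • p n := by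
  rw [← sub_eq_iff_eq_add]
  have hdeg : (loweringOp a (p (n + 1)) - (2 * c (n + 1)) • p n).natDegree ≤ n + 1 :=
    (natDegree_sub_le_of_le (natDegree_loweringOp_le a (p.natDegree_eq _).le)
      ((natDegree_smul_le _ _).trans (p.natDegree_eq n).le)).trans (by simp)
  have horth : ∀ k < n + 1, Φ (loweringOp a (p (n + 1)) - (2 * c (n + 1)) • p n) (p k) = 0 := by
    intro k hk
    have hright : Φ (p (n + 1)) (loweringOp a (p k)) = 0 :=
      h.form_right_eq_zero_of_degree_lt (degree_le_natDegree.trans_lt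
        (Nat.cast_lt.2 ((natDegree_loweringOp_le a (p.natDegree_eq k).le).trans_lt hk)))
    have hleft := hparts (p (n + 1)) (p k)
    rw [hright, add_zero, hrec.succ] at hleft
    simp [hleft, h.orthogonal (show n + 2 ≠ k by lia), h.orthogonal hk.ne', mul_assoc]
  simpa [h.coeff_loweringOp_self, coeff_sequence_of_lt p] using h.eq_coeff_smul hdeg horth

theorem coeff_commutator (h : IsMonicOrthogonal Φ p) (hrec : IsThreeTerm p b c)
    (hparts : ∀ q r, Φ (loweringOp a q) r + Φ q (loweringOp a r) = 2 * Φ (X * q) r) (n : ℕ) :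
    (n + 1) + (p (n + 1)).coeff n * a = a * (p (n + 1)).coeff n + 2 * c (n + 1) := by
  simpa [coeff_loweringOp, h.coeff_self] using
    congrArg (coeff · n) (h.loweringOp_succ hrec hparts n)

theorem form_mul_casimirPoly_eq_zero (h : IsMonicOrthogonal Φ p)
    (hsymm : ∀ q r, Φ (q * casimirPoly k a) r = Φ q (r * casimirPoly k a)) {m : ℕ} (hm : m < n) :
    Φ (p (n + 1) * casimirPoly k a) (p m) = 0 := by
  rw [hsymm]
  refine h.form_right_eq_zero_of_degree_lt (degree_le_natDegree.trans_lt (Nat.cast_lt.2 ?_))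
  exact (natDegree_mul_casimirPoly_le k a (p.natDegree_eq m).le).trans_lt (by lia)

theorem form_succ_mul_casimirPoly (h : IsMonicOrthogonal Φ p) (hrec : IsThreeTerm p b c)
    (hc : ∀ n, Φ (p (n + 1)) (p (n + 1)) = c (n + 1) * Φ (p n) (p n))
    (hparts : ∀ q r, Φ (loweringOp a q) r + Φ q (loweringOp a r) = 2 * Φ (X * q) r)
    (hsymm : ∀ q r, Φ (q * casimirPoly k a) r = Φ q (r * casimirPoly k a)) (n : ℕ) :
    Φ (p (n + 1) * casimirPoly k a) (p n) =
      (c (n + 1) * a - 2 * c (n + 1) * b n) * Φ (p n) (p n) := by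
  calc Φ (p (n + 1) * casimirPoly k a) (p n)
      = -(c (n + 1) * (Φ (p n) (p n) * star a)) := by
        rw [hsymm, h.form_right_eq (natDegree_mul_casimirPoly_le k a (p.natDegree_eq n).le),
          coeff_succ_mul_casimirPoly, coeff_sequence_of_lt p n.lt_succ_self, h.coeff_self, hc]
        simp [mul_assoc]
    _ = (c (n + 1) * a - 2 * c (n + 1) * b n) * Φ (p n) (p n) := by
        rw [eq_sub_of_add_eq' (h.mul_form_add_form_mul_star hrec hparts n)]
        noncomm_ring

theorem mul_casimirPoly_eq (h : IsMonicOrthogonal Φ p) (hrec : IsThreeTerm p b c)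
    (hc : ∀ n, Φ (p (n + 1)) (p (n + 1)) = c (n + 1) * Φ (p n) (p n))
    (hparts : ∀ q r, Φ (loweringOp a q) r + Φ q (loweringOp a r) = 2 * Φ (X * q) r)
    (hsymm : ∀ q r, Φ (q * casimirPoly k a) r = Φ q (r * casimirPoly k a)) (n : ℕ) :
    p (n + 1) * casimirPoly k a = -a • p (n + 2) +
      ((n + 1) + k - 2 * c (n + 1) - a * b (n + 1)) • p (n + 1) +
      (c (n + 1) * a - 2 * c (n + 1) * b n) • p n := by
  set d := c (n + 1) * a - 2 * c (n + 1) * b n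
  set q := p (n + 1) * casimirPoly k a + a • p (n + 2) - d • p n
  have hdeg : q.natDegree ≤ n + 1 := by
    refine natDegree_le_iff_coeff_eq_zero.2 fun m hm => ?_
    obtain ⟨m, rfl⟩ : ∃ l, m = l + 1 := ⟨m - 1, by lia⟩
    rcases (Nat.lt_succ_iff.1 hm).eq_or_lt with rfl | hlt
    · simp [q, coeff_succ_mul_casimirPoly, h.coeff_self, coeff_sequence_of_lt p]
    · simp [q, coeff_succ_mul_casimirPoly, coeff_sequence_of_lt, show n + 2 < m + 1 by lia,
        show n + 1 < m by lia, show n + 1 < m + 1 by lia, show n < m + 1 by lia]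
  have hcoeff : q.coeff (n + 1) = (n + 1) + k - 2 * c (n + 1) - a * b (n + 1) := by
    have hsucc := eq_sub_of_add_eq (h.coeff_succ_add hrec n)
    have hcomm := eq_sub_of_add_eq' (h.coeff_commutator hrec hparts n)
    simp only [q, coeff_sub, coeff_add, coeff_smul, coeff_succ_mul_casimirPoly, h.coeff_self,
      coeff_sequence_of_lt p n.lt_succ_self, hsucc, hcomm, smul_eq_mul]
    noncomm_ring
  have horth : ∀ m < n + 1, Φ q (p m) = 0 := by
    intro m hm
    rcases (Nat.lt_succ_iff.1 hm).eq_or_lt with rfl | hlt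
    · simp [q, h.form_succ_mul_casimirPoly hrec hc hparts hsymm, h.orthogonal, d]
    · simp [q, h.form_mul_casimirPoly_eq_zero hsymm hlt, h.orthogonal hlt.ne',
        h.orthogonal (show n + 2 ≠ m by lia)]
  rw [← hcoeff, ← h.eq_coeff_smul hdeg horth]
  simp only [q, neg_smul]
  abel

end IsMonicOrthogonal

end Form

section RealEval

variable {R : Type*} [Ring R] [Algebra ℝ R]

/-- Evaluation of `p : R[X]` at a real number, which is central in `R`; unlike `Polynomial.eval` at
a general element, it is a ring homomorphism. -/
noncomputable def realEval (y : ℝ) : R[X] →+* R :=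
  eval₂RingHom' (RingHom.id R) (algebraMap ℝ R y) fun a => (Algebra.commutes y a).symm

@[simp]
theorem realEval_C (y : ℝ) (a : R) : realEval y (C a) = a :=
  eval₂_C _ _

@[simp]
theorem realEval_X (y : ℝ) : realEval y (X : R[X]) = algebraMap ℝ R y :=
  eval₂_X _ _

theorem realEval_monomial (y : ℝ) (k : ℕ) (a : R) : realEval y (monomial k a) = y ^ k • a := by
  rw [← C_mul_X_pow_eq_monomial, map_mul, map_pow, realEval_C, realEval_X, ← map_pow,
    ← Algebra.commutes, Algebra.smul_def]

theorem realEval_smul (y : ℝ) (a : R) (p : R[X]) : realEval y (a • p) = a * realEval y p := by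
  rw [smul_eq_C_mul, map_mul, realEval_C]

theorem realEval_casimirPoly (y : ℝ) (k a : R) : realEval y (casimirPoly k a) = k - y • a := by
  rw [casimirPoly, map_sub, map_mul, realEval_C, realEval_C, realEval_X, Algebra.smul_def]

theorem realEval_eq_sum (y : ℝ) (p : R[X]) :
    realEval y p = ∑ k ∈ p.support, y ^ k • p.coeff k := by
  conv_lhs => rw [p.as_sum_support, map_sum]
  simp only [realEval_monomial]

theorem eq_zero_of_forall_realEval_eq_zero {p : R[X]} (h : ∀ y, realEval y p = 0) : p = 0 := by
  ext n
  refine (Module.forall_dual_apply_eq_zero_iff ℝ _).1 fun f => ?_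
  have hzero : ∑ k ∈ p.support, monomial k (f (p.coeff k)) = 0 := Polynomial.funext fun y => by
    calc eval y (∑ k ∈ p.support, monomial k (f (p.coeff k)))
        = f (realEval y p) := by simp [eval_finsetSum, realEval_eq_sum, mul_comm]
      _ = eval y 0 := by rw [h, map_zero, eval_zero]
  have hcoeff := congrArg (coeff · n) hzero
  by_cases hn : p.coeff n = 0
  · rw [hn, map_zero]
  · simpa [finsetSum_coeff, coeff_monomial, hn] using hcoeff

theorem eq_of_forall_realEval_eq {p q : R[X]} (h : ∀ y, realEval y p = realEval y q) : p = q :=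
  sub_eq_zero.1 (eq_zero_of_forall_realEval_eq_zero fun y => by rw [map_sub, h, sub_self])

theorem isThreeTerm_of_forall_realEval {p : Polynomial.Sequence R} {b c : ℕ → R}
    (h : ∀ n x, x • realEval x (p n) = realEval x (p (n + 1)) + b n * realEval x (p n) +
      c n * (if n = 0 then 0 else realEval x (p (n - 1)))) : IsThreeTerm p b c := by
  constructor
  · refine eq_of_forall_realEval_eq fun x => ?_
    simpa [realEval_smul, ← Algebra.smul_def] using h 0 x
  · refine fun n => eq_of_forall_realEval_eq fun x => ?_
    simpa [realEval_smul, ← Algebra.smul_def] using h (n + 1) x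

end RealEval

section Gaussian

theorem integrable_pow_mul_exp_neg_sq (k : ℕ) :
    Integrable fun y : ℝ => y ^ k * Real.exp (-y ^ 2) := by
  simpa using integrable_rpow_mul_exp_neg_mul_sq one_pos (s := k)
    (neg_one_lt_zero.trans_le k.cast_nonneg)

variable {R : Type*} [NormedRing R] [NormedAlgebra ℝ R]

theorem hasDerivAt_realEval (p : R[X]) (y : ℝ) :
    HasDerivAt (fun y => realEval y p) (realEval y (derivative p)) y := by
  induction p using Polynomial.induction_on' with
  | add p q hp hq =>
    simp only [map_add]
    exact hp.add hq
  | monomial k a =>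
    simp only [derivative_monomial, realEval_monomial]
    refine ((hasDerivAt_pow k y).smul_const a).congr_deriv ?_
    rw [mul_comm (k : ℝ), mul_smul, Nat.cast_smul_eq_nsmul, nsmul_eq_mul, (Nat.cast_commute k a).eq]

variable [StarRing R]

/-- The function `exp (-y²) p(y) q(y)*`, whose integral over the line is the Gaussian form. -/
noncomputable def gaussIntegrand (p q : R[X]) (y : ℝ) : R :=
  Real.exp (-y ^ 2) • (realEval y p * star (realEval y q))

theorem gaussIntegrand_add_left (p q r : R[X]) :
    gaussIntegrand (p + q) r = gaussIntegrand p r + gaussIntegrand q r := by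
  ext y
  simp [gaussIntegrand, add_mul]

theorem gaussIntegrand_add_right (p q r : R[X]) :
    gaussIntegrand p (q + r) = gaussIntegrand p q + gaussIntegrand p r := by
  ext y
  simp [gaussIntegrand, mul_add]

theorem gaussIntegrand_smul_left (a : R) (p q : R[X]) (y : ℝ) :
    gaussIntegrand (a • p) q y = a * gaussIntegrand p q y := by
  simp [gaussIntegrand, smul_eq_C_mul, mul_assoc]

theorem gaussIntegrand_smul_right (a : R) (p q : R[X]) (y : ℝ) :
    gaussIntegrand p (a • q) y = gaussIntegrand p q y * star a := by
  simp [gaussIntegrand, smul_eq_C_mul, mul_assoc]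

variable [StarModule ℝ R]

theorem integrable_gaussIntegrand (p q : R[X]) : Integrable (gaussIntegrand p q) := by
  induction p using Polynomial.induction_on' with
  | add p₁ p₂ h₁ h₂ => exact gaussIntegrand_add_left p₁ p₂ q ▸ h₁.add h₂
  | monomial j a =>
    induction q using Polynomial.induction_on' with
    | add q₁ q₂ h₁ h₂ => exact gaussIntegrand_add_right _ q₁ q₂ ▸ h₁.add h₂
    | monomial k b =>
      have hmonomial : gaussIntegrand (monomial j a) (monomial k b) =
          fun y => (y ^ (j + k) * Real.exp (-y ^ 2)) • (a * star b) := by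
        ext y
        simp only [gaussIntegrand, realEval_monomial, star_smul, star_trivial, smul_mul_smul_comm,
          smul_smul, pow_add, mul_comm (Real.exp _)]
      exact hmonomial ▸ (integrable_pow_mul_exp_neg_sq (j + k)).smul_const (a * star b)

/-- The Gaussian form `∫ exp (-y²) p(y) q(y)* dy`. -/
noncomputable def gaussForm : PolyForm R :=
  LinearMap.mk₂'ₛₗ _ _ (fun p q => ∫ y, gaussIntegrand p q y)
    (fun p q r => by
      rw [gaussIntegrand_add_left]
      exact integral_add (integrable_gaussIntegrand p r) (integrable_gaussIntegrand q r))
    (fun a p q => by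
      simp only [gaussIntegrand_smul_left]
      exact integral_const_mul_of_integrable (integrable_gaussIntegrand p q))
    (fun p q r => by
      rw [gaussIntegrand_add_right]
      exact integral_add (integrable_gaussIntegrand p q) (integrable_gaussIntegrand p r))
    (fun a p q => by
      simp only [gaussIntegrand_smul_right]
      exact integral_mul_const_of_integrable (integrable_gaussIntegrand p q))

theorem gaussForm_mul_C (p q : R[X]) (a : R) :
    gaussForm (p * C a) q = gaussForm p (q * C (star a)) := by
  simp [gaussForm, gaussIntegrand, mul_assoc]

variable [ContinuousStar R]

theorem hasDerivAt_gaussIntegrand (p q : R[X]) (y : ℝ) :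
    HasDerivAt (gaussIntegrand p q) ((gaussIntegrand (derivative p) q +
      gaussIntegrand p (derivative q) - (2 : ℝ) • gaussIntegrand (X * p) q) y) y := by
  have hexp : HasDerivAt (fun y : ℝ => Real.exp (-y ^ 2)) (Real.exp (-y ^ 2) * -(2 * y)) y := by
    simpa using (hasDerivAt_pow 2 y).neg.exp
  refine (hexp.smul ((hasDerivAt_realEval p y).mul (hasDerivAt_realEval q y).star)).congr_deriv ?_
  simp only [gaussIntegrand, Pi.add_apply, Pi.sub_apply, Pi.smul_apply, map_mul, realEval_X,
    ← Algebra.smul_def, smul_mul_assoc]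
  module

theorem gaussForm_derivative (p q : R[X]) :
    gaussForm (derivative p) q + gaussForm p (derivative q) = 2 * gaussForm (X * p) q := by
  have h₁ := integrable_gaussIntegrand (derivative p) q
  have h₂ := integrable_gaussIntegrand p (derivative q)
  have h₃ := (integrable_gaussIntegrand (X * p) q).smul (2 : ℝ)
  have hzero := integral_eq_zero_of_hasDerivAt_of_integrable (hasDerivAt_gaussIntegrand p q)
    ((h₁.add h₂).sub h₃) (integrable_gaussIntegrand p q)
  rw [integral_sub' (h₁.add h₂) h₃, integral_add' h₁ h₂, sub_eq_zero] at hzero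
  refine hzero.trans ((integral_smul _ _).trans ?_)
  rw [two_smul, ← two_mul]
  rfl

end Gaussian

section MulRight

variable {R : Type*} [Ring R] [StarRing R]

/-- The form with the weight `L L*` inserted: `(p, q) ↦ Φ (p L) (q L)`. -/
noncomputable def PolyForm.mulRight (Φ : PolyForm R) (L : R[X]) : PolyForm R :=
  LinearMap.mk₂'ₛₗ _ _ (fun p q => Φ (p * L) (q * L))
    (fun p q r => by simp [add_mul]) (fun a p q => by simp [smul_mul_assoc])
    (fun p q r => by simp [add_mul]) (fun a p q => by simp [smul_mul_assoc])

theorem PolyForm.mulRight_apply (Φ : PolyForm R) (L p q : R[X]) :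
    Φ.mulRight L p q = Φ (p * L) (q * L) :=
  rfl

variable {Φ : PolyForm R} {L : R[X]}

theorem PolyForm.mulRight_loweringOp {a : R}
    (hΦ : ∀ p q, Φ (derivative p) q + Φ p (derivative q) = 2 * Φ (X * p) q)
    (hL : derivative L = C a * L) (p q : R[X]) :
    Φ.mulRight L (loweringOp a p) q + Φ.mulRight L p (loweringOp a q) =
      2 * Φ.mulRight L (X * p) q := by
  have hmul : ∀ r, loweringOp a r * L = derivative (r * L) := fun r => by
    rw [loweringOp, derivative_mul, hL, add_mul, mul_assoc]
  simp only [mulRight_apply, hmul, mul_assoc, hΦ]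

theorem PolyForm.mulRight_mul {T : R[X]} {j : R}
    (hΦ : ∀ p q, Φ (p * C j) q = Φ p (q * C j)) (hT : T * L = L * C j) (p q : R[X]) :
    Φ.mulRight L (p * T) q = Φ.mulRight L p (q * T) := by
  simp only [mulRight_apply, mul_assoc, hT]
  simp only [← mul_assoc, hΦ]

end MulRight

section Hermite

/-- The physicists' Hermite polynomials divided by `m!`; in this normalization they are the
coefficients of the generating function `exp (2xt - t²)`. -/
noncomputable def dividedHermite : ℕ → ℝ[X]
  | 0 => 1
  | 1 => 2 * X
  | m + 2 => C (2 / (m + 2) : ℝ) * (X * dividedHermite (m + 1) - dividedHermite m)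

theorem eval_dividedHermite (x : ℝ) : ∀ m, (dividedHermite m).eval x = hermiteF m x / m.factorial
  | 0 => by simp [dividedHermite, hermiteF]
  | 1 => by simp [dividedHermite, hermiteF]
  | m + 2 => by
    simp only [dividedHermite, hermiteF, eval_mul, eval_sub, eval_C, eval_X,
      eval_dividedHermite x m, eval_dividedHermite x (m + 1), Nat.factorial_succ]
    push_cast
    field_simp
    ring

theorem add_two_mul_dividedHermite (m : ℕ) :
    (m + 2 : ℝ[X]) * dividedHermite (m + 2) =
      2 * (X * dividedHermite (m + 1) - dividedHermite m) := by
  have hC : (m + 2 : ℝ[X]) * C (2 / (m + 2) : ℝ) = 2 := by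
    have hne : (m + 2 : ℝ) ≠ 0 := by positivity
    rw [show (m + 2 : ℝ[X]) = C (m + 2 : ℝ) by rw [C_add, C_eq_natCast, C_ofNat], ← C_mul,
      mul_div_cancel₀ _ hne, C_ofNat]
  rw [dividedHermite, ← mul_assoc, hC]

theorem derivative_dividedHermite_succ :
    ∀ m, derivative (dividedHermite (m + 1)) = 2 * dividedHermite m
  | 0 => by simp [dividedHermite]
  | 1 => by
    have htwo : dividedHermite 2 = X * dividedHermite 1 - dividedHermite 0 := by
      simp [dividedHermite]
    rw [htwo, derivative_sub, derivative_mul, derivative_X, derivative_dividedHermite_succ 0]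
    simp only [dividedHermite, derivative_one]
    ring
  | m + 2 => by
    have hderiv : (m + 3 : ℝ[X]) * derivative (dividedHermite (m + 3)) =
        2 * (dividedHermite (m + 2) + X * (2 * dividedHermite (m + 1)) - 2 * dividedHermite m) := by
      have := congrArg derivative (add_two_mul_dividedHermite (m + 1))
      simpa [derivative_dividedHermite_succ m, derivative_dividedHermite_succ (m + 1),
        add_assoc, show (1 : ℝ[X]) + 2 = 3 by norm_num] using this
    have hne : (m + 3 : ℝ[X]) ≠ 0 := by exact_mod_cast (m + 2).succ_ne_zero
    refine mul_left_cancel₀ hne ?_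
    linear_combination hderiv - 2 * add_two_mul_dividedHermite m

variable {R : Type*} [Ring R]

theorem mul_pow_sub_pow_mul {a j : R} (h : j * a - a * j = a) (m : ℕ) :
    j * a ^ m - a ^ m * j = m • a ^ m := by
  induction m with
  | zero => simp
  | succ m ih =>
    calc j * a ^ (m + 1) - a ^ (m + 1) * j
        = (j * a ^ m - a ^ m * j) * a + a ^ m * (j * a - a * j) := by noncomm_ring
      _ = (m + 1) • a ^ (m + 1) := by rw [ih, h, smul_mul_assoc, ← pow_succ, add_smul, one_smul]

variable [Algebra ℝ R]

attribute [local instance] Polynomial.algebra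

theorem X_mul_smul (p : ℝ[X]) (q : R[X]) : X * (p • q) = (X * p) • q := by
  simp [Algebra.smul_def, mul_assoc]

theorem derivative_smul_C (p : ℝ[X]) (a : R) : derivative (p • C a) = derivative p • C a := by
  simp [Algebra.smul_def, derivative_map]

/-- The term `H_m(x) / m! a ^ m` of the generating function `exp (2xa - a²)`. -/
noncomputable def hermiteTerm (a : R) (m : ℕ) : R[X] :=
  dividedHermite m • C (a ^ m)

theorem realEval_hermiteTerm (x : ℝ) (a : R) (m : ℕ) :
    realEval x (hermiteTerm a m) = (hermiteF m x / m.factorial) • a ^ m := by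
  have hmap (p : ℝ[X]) : realEval x (algebraMap ℝ[X] R[X] p) = algebraMap ℝ R (p.eval x) := by
    change ((realEval x).comp (algebraMap ℝ[X] R[X])) p = ((algebraMap ℝ R).comp (evalRingHom x)) p
    congr 1
    ext <;> simp
  rw [hermiteTerm, Algebra.smul_def, map_mul, realEval_C, hmap, eval_dividedHermite,
    ← Algebra.smul_def]

theorem derivative_hermiteTerm_zero (a : R) : derivative (hermiteTerm a 0) = 0 := by
  simp [hermiteTerm, dividedHermite]

theorem derivative_hermiteTerm_succ (a : R) (m : ℕ) :
    derivative (hermiteTerm a (m + 1)) = C (2 * a) * hermiteTerm a m := by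
  rw [hermiteTerm, derivative_smul_C, derivative_dividedHermite_succ, hermiteTerm, mul_smul_comm,
    ← C_mul, mul_assoc, ← pow_succ', mul_smul, two_smul, two_mul, C_add, smul_add]

theorem hermiteTerm_one (a : R) : hermiteTerm a 1 = X * C (2 * a) * hermiteTerm a 0 := by
  simp [hermiteTerm, dividedHermite, Algebra.smul_def, two_mul, mul_add, add_mul]

theorem add_two_nsmul_hermiteTerm (a : R) (m : ℕ) :
    (m + 2) • hermiteTerm a (m + 2) =
      X * C (2 * a) * hermiteTerm a (m + 1) - C (2 * a ^ 2) * hermiteTerm a m := by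
  have hleft : (m + 2) • hermiteTerm a (m + 2) =
      ((m + 2 : ℝ[X]) * dividedHermite (m + 2)) • C (a ^ (m + 2)) := by
    rw [hermiteTerm, mul_smul, ← Nat.cast_smul_eq_nsmul ℝ[X], Nat.cast_add, Nat.cast_ofNat]
  have hX : X * C (2 * a) * hermiteTerm a (m + 1) =
      (X * dividedHermite (m + 1)) • C (2 * a ^ (m + 2)) := by
    rw [hermiteTerm, mul_assoc, mul_smul_comm, X_mul_smul, ← C_mul, mul_assoc, ← pow_succ']
  have hC : C (2 * a ^ 2) * hermiteTerm a m = dividedHermite m • C (2 * a ^ (m + 2)) := by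
    rw [hermiteTerm, mul_smul_comm, ← C_mul, mul_assoc, ← pow_add, add_comm 2 m]
  rw [hleft, add_two_mul_dividedHermite, hX, hC, two_mul (a ^ _), C_add]
  module

theorem C_mul_hermiteTerm_sub {a j : R} (h : j * a - a * j = a) (m : ℕ) :
    C j * hermiteTerm a m - hermiteTerm a m * C j = m • hermiteTerm a m := by
  rw [hermiteTerm, mul_smul_comm, smul_mul_assoc, ← smul_sub, ← C_mul, ← C_mul, ← C_sub,
    mul_pow_sub_pow_mul h, map_nsmul, smul_comm]

/-- The partial sum of the generating function `exp (2xa - a²)`, which is the whole exponential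
when `a ^ N = 0`. -/
noncomputable def hermiteSum (a : R) (N : ℕ) : R[X] :=
  ∑ m ∈ range N, hermiteTerm a m

theorem derivative_hermiteSum_succ (a : R) (N : ℕ) :
    derivative (hermiteSum a (N + 1)) = C (2 * a) * hermiteSum a N := by
  rw [hermiteSum, sum_range_succ', derivative_add, derivative_sum, hermiteSum, mul_sum,
    derivative_hermiteTerm_zero, add_zero]
  simp only [derivative_hermiteTerm_succ]

theorem sum_nsmul_hermiteTerm (a : R) (N : ℕ) :
    ∑ m ∈ range (N + 2), m • hermiteTerm a m =
      X * C (2 * a) * hermiteSum a (N + 1) - C (2 * a ^ 2) * hermiteSum a N := by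
  induction N with
  | zero => simp [hermiteSum, sum_range_succ, hermiteTerm_one]
  | succ N ih =>
    rw [sum_range_succ, ih, add_two_nsmul_hermiteTerm, hermiteSum, hermiteSum, hermiteSum,
      sum_range_succ _ (N + 1), sum_range_succ _ N]
    noncomm_ring

theorem hermiteSum_of_pow_eq_zero {a : R} {N M : ℕ} (ha : a ^ N = 0) (h : N ≤ M) :
    hermiteSum a M = hermiteSum a N := by
  refine (sum_subset (range_subset_range.2 h) fun m _ hm => ?_).symm
  rw [hermiteTerm, pow_eq_zero_of_le (not_lt.1 (mt mem_range.2 hm)) ha, C_0, smul_zero]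

theorem derivative_hermiteSum {a : R} {N : ℕ} (ha : a ^ N = 0) :
    derivative (hermiteSum a N) = C (2 * a) * hermiteSum a N := by
  rw [← derivative_hermiteSum_succ, hermiteSum_of_pow_eq_zero ha N.le_succ]

theorem casimirPoly_mul_hermiteSum {a j : R} {N : ℕ} (ha : a ^ N = 0) (hj : j * a - a * j = a) :
    casimirPoly (j + 2 * a ^ 2) (2 * a) * hermiteSum a N = hermiteSum a N * C j := by
  have hcomm : C j * hermiteSum a N - hermiteSum a N * C j =
      X * C (2 * a) * hermiteSum a N - C (2 * a ^ 2) * hermiteSum a N := by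
    rw [← hermiteSum_of_pow_eq_zero ha (N.le_add_right 2), hermiteSum, mul_sum, sum_mul,
      ← sum_sub_distrib]
    simp only [C_mul_hermiteTerm_sub hj]
    rw [sum_nsmul_hermiteTerm, hermiteSum_of_pow_eq_zero ha N.le_succ, ← hermiteSum,
      hermiteSum_of_pow_eq_zero ha (N.le_add_right 2)]
  rw [casimirPoly, C_add, sub_mul, add_mul, eq_add_of_sub_eq hcomm]
  abel

end Hermite

section Specialization

variable {N : ℕ} (α : Fin N → ℝ)

/-- The nilpotent matrix `A / 2`, whose powers have the entries `α_j / α_k`. -/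
noncomputable def halfShift : Matrix (Fin N) (Fin N) ℂ :=
  Matrix.of fun j k => if (j : ℕ) = k + 1 then ((α j / α k : ℝ) : ℂ) else 0

theorem two_mul_halfShift : 2 * halfShift α = Amat N α := by
  ext j k
  rw [two_mul]
  simp only [halfShift, Amat, Matrix.add_apply, of_apply]
  split_ifs <;> push_cast <;> ring

theorem two_mul_halfShift_sq : 2 * halfShift α ^ 2 = (1 / 2 : ℂ) • (Amat N α * Amat N α) := by
  rw [← two_mul_halfShift, two_mul, two_mul, pow_two, mul_add, add_mul]
  module

variable {α}

theorem halfShift_pow_apply (hα : ∀ j, α j ≠ 0) (m : ℕ) (j k : Fin N) :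
    (halfShift α ^ m) j k = if (j : ℕ) = k + m then ((α j / α k : ℝ) : ℂ) else 0 := by
  induction m generalizing j with
  | zero =>
    simp only [pow_zero, one_apply, Fin.ext_iff, add_zero]
    split_ifs with h
    · rw [Fin.ext h, div_self (hα k), Complex.ofReal_one]
    · rfl
  | succ m ih =>
    simp only [pow_succ', mul_apply, ih]
    split_ifs with h
    · have hne := hα ⟨k + m, by lia⟩
      rw [sum_eq_single ⟨k + m, by lia⟩]
      · simp only [halfShift, of_apply, h, add_assoc, if_true, ← Complex.ofReal_mul,
          div_mul_div_cancel₀ hne]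
      · intro l _ hl
        rw [if_neg (mt Fin.ext hl), mul_zero]
      · exact fun hl => absurd (mem_univ _) hl
    · refine sum_eq_zero fun l _ => ?_
      simp only [halfShift, of_apply, mul_ite, ite_mul, zero_mul, mul_zero]
      split_ifs <;> first | rfl | lia

theorem halfShift_pow_eq_zero (hα : ∀ j, α j ≠ 0) : halfShift α ^ N = 0 := by
  ext j k
  rw [halfShift_pow_apply hα, if_neg (by lia), Matrix.zero_apply]

theorem Jmat_mul_halfShift_sub (α : Fin N → ℝ) :
    Jmat N * halfShift α - halfShift α * Jmat N = halfShift α := by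
  ext j k
  simp only [Jmat, Matrix.sub_apply, diagonal_mul, mul_diagonal, halfShift, of_apply]
  split_ifs with h
  · rw [h]
    push_cast
    ring
  · simp

theorem star_Jmat : star (Jmat N) = Jmat N := by
  simp [Jmat, star_eq_conjTranspose, diagonal_conjTranspose, Pi.star_def]

theorem realEval_hermiteSum_halfShift (hα : ∀ j, α j ≠ 0) (x : ℝ) :
    realEval x (hermiteSum (halfShift α) N) = Lmat N α x := by
  ext j k
  simp only [hermiteSum, map_sum, realEval_hermiteTerm, Matrix.sum_apply, Matrix.smul_apply,
    halfShift_pow_apply hα, Lmat, of_apply]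
  split_ifs with h
  · rw [sum_eq_single (j - k : ℕ)]
    · rw [if_pos (by lia), Complex.real_smul, ← Complex.ofReal_mul]
    · intro m _ hm
      rw [if_neg (by lia), smul_zero]
    · exact fun hm => absurd (mem_range.2 (by lia)) hm
  · exact sum_eq_zero fun m _ => by rw [if_neg (by lia), smul_zero]

theorem exists_sequence_realEval_eq [Nonempty (Fin N)] {P : ℕ → ℝ → Matrix (Fin N) (Fin N) ℂ}
    (hP : ∀ n, IsMonicMatPoly N n (P n)) :
    ∃ p : Polynomial.Sequence (Matrix (Fin N) (Fin N) ℂ),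
      (∀ n, (p n).Monic) ∧ ∀ n x, realEval x (p n) = P n x := by
  choose c hlead hc using hP
  let q (n : ℕ) : (Matrix (Fin N) (Fin N) ℂ)[X] := ∑ k ∈ range (n + 1), monomial k (c n k)
  have hdeg (n : ℕ) : (q n).natDegree ≤ n :=
    natDegree_sum_le_of_forall_le _ _ fun k hk =>
      (natDegree_monomial_le _).trans (Nat.lt_succ_iff.1 (mem_range.1 hk))
  have hcoeff (n : ℕ) : (q n).coeff n = 1 := by
    simp [q, coeff_monomial, hlead]
  refine ⟨⟨q, fun n => ?_⟩, fun n => monic_of_natDegree_le_of_coeff_eq_one n (hdeg n) (hcoeff n),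
    fun n x => ?_⟩
  · exact degree_eq_of_le_of_coeff_ne_zero (natDegree_le_iff_degree_le.1 (hdeg n))
      (by rw [hcoeff]; exact one_ne_zero)
  · change realEval x (q n) = P n x
    simp only [q, map_sum, realEval_monomial, hc, ← Complex.ofReal_pow, Complex.coe_smul]

open scoped Matrix.Norms.Frobenius

theorem matInt_gaussIntegrand (p q : (Matrix (Fin N) (Fin N) ℂ)[X]) :
    matInt N (gaussIntegrand p q) = gaussForm p q := by
  ext i j
  exact (entryLinearMap ℝ ℂ i j).toContinuousLinearMap.integral_comp_comm
    (integrable_gaussIntegrand p q)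

/-- The matrix inner product `∫ p(y) W(y) q(y)* dy` of the Hermite-type weight, as a form on matrix
polynomials. -/
noncomputable def hermiteForm (α : Fin N → ℝ) : PolyForm (Matrix (Fin N) (Fin N) ℂ) :=
  gaussForm.mulRight (hermiteSum (halfShift α) N)

theorem hermiteForm_eq_matIP (hα : ∀ j, α j ≠ 0) (p q : (Matrix (Fin N) (Fin N) ℂ)[X]) :
    hermiteForm α p q =
      matIP N (hermW N α) (fun y => realEval y p) (fun y => realEval y q) := by
  have hW : (fun y => realEval y p * hermW N α y * (realEval y q)ᴴ) =
      gaussIntegrand (p * hermiteSum (halfShift α) N) (q * hermiteSum (halfShift α) N) := by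
    ext1 y
    simp only [gaussIntegrand, hermW, map_mul, realEval_hermiteSum_halfShift hα,
      star_eq_conjTranspose, conjTranspose_mul, mul_smul_comm, smul_mul_assoc, mul_assoc]
  rw [matIP, hW, matInt_gaussIntegrand, hermiteForm, PolyForm.mulRight_apply]

theorem hermiteForm_loweringOp (hα : ∀ j, α j ≠ 0) (p q : (Matrix (Fin N) (Fin N) ℂ)[X]) :
    hermiteForm α (loweringOp (Amat N α) p) q + hermiteForm α p (loweringOp (Amat N α) q) =
      2 * hermiteForm α (X * p) q :=
  PolyForm.mulRight_loweringOp gaussForm_derivative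
    (two_mul_halfShift α ▸ derivative_hermiteSum (halfShift_pow_eq_zero hα)) p q

theorem hermiteForm_mul_casimirPoly (hα : ∀ j, α j ≠ 0) (p q : (Matrix (Fin N) (Fin N) ℂ)[X]) :
    let T := casimirPoly (Jmat N + (1 / 2 : ℂ) • (Amat N α * Amat N α)) (Amat N α)
    hermiteForm α (p * T) q = hermiteForm α p (q * T) := by
  refine PolyForm.mulRight_mul (j := Jmat N) (fun p q => ?_) ?_ p q
  · rw [gaussForm_mul_C, star_Jmat]
  · rw [← two_mul_halfShift_sq, ← two_mul_halfShift]
    exact casimirPoly_mul_hermiteSum (halfShift_pow_eq_zero hα) (Jmat_mul_halfShift_sub α)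

end Specialization

/-- **The Casimir operator as a difference operator** (Lemma 5.9 of the paper):
for the Hermite-type weight, the monic MVOPs satisfy
`P(x,n)(J − xA + ½A²) = −A P(x,n+1) + (nI + J − 2C(n) − AB(n) + ½A²)P(x,n)
 + (C(n)A − 2C(n)B(n−1))P(x,n−1)`. -/
theorem hermite_casimir_difference_relation
    (N : ℕ) (hN : 1 ≤ N) (α : Fin N → ℝ) (hα : ∀ j, 0 < α j)
    (P : ℕ → ℝ → Matrix (Fin N) (Fin N) ℂ)
    (hPmonic : ∀ n, IsMonicMatPoly N n (P n))
    (hPorth : ∀ n m, n ≠ m → matIP N (hermW N α) (P n) (P m) = 0)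
    (hHpos : ∀ n, (matIP N (hermW N α) (P n) (P n)).PosDef)
    (B C : ℕ → Matrix (Fin N) (Fin N) ℂ)
    (hrec : ∀ (n : ℕ) (x : ℝ),
      (x : ℂ) • P n x =
        P (n + 1) x + B n * P n x + C n * (if n = 0 then 0 else P (n - 1) x))
    (hC : ∀ n, 1 ≤ n →
      C n = matIP N (hermW N α) (P n) (P n) *
        (matIP N (hermW N α) (P (n - 1)) (P (n - 1)))⁻¹) :
    ∀ (n : ℕ), 1 ≤ n → ∀ (x : ℝ),
      P n x * (Jmat N - (x : ℂ) • Amat N α + (1 / 2 : ℂ) • (Amat N α * Amat N α)) =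
        -(Amat N α) * P (n + 1) x +
          ((n : ℂ) • (1 : Matrix (Fin N) (Fin N) ℂ) + Jmat N - (2 : ℂ) • C n -
              Amat N α * B n + (1 / 2 : ℂ) • (Amat N α * Amat N α)) * P n x +
          (C n * Amat N α - (2 : ℂ) • (C n * B (n - 1))) * P (n - 1) x := by
  have hne (j : Fin N) : α j ≠ 0 := (hα j).ne'
  have : Nonempty (Fin N) := ⟨⟨0, hN⟩⟩
  obtain ⟨p, hmonic, hp⟩ := exists_sequence_realEval_eq hPmonic
  have hform (n m : ℕ) : hermiteForm α (p n) (p m) = matIP N (hermW N α) (P n) (P m) := by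
    simp only [hermiteForm_eq_matIP hne, hp]
  have horth : IsMonicOrthogonal (hermiteForm α) p :=
    ⟨hmonic, fun h => (hform _ _).trans (hPorth _ _ h), fun n => hform n n ▸ (hHpos n).isUnit⟩
  have hthree : IsThreeTerm p B C := isThreeTerm_of_forall_realEval fun n x => by
    simpa only [hp, Complex.coe_smul] using hrec n x
  have hnorm (n : ℕ) : hermiteForm α (p (n + 1)) (p (n + 1)) =
      C (n + 1) * hermiteForm α (p n) (p n) := by
    rw [hform, hform, hC (n + 1) n.succ_pos, Nat.add_sub_cancel,
      nonsing_inv_mul_cancel_right _ _ ((isUnit_iff_isUnit_det _).1 (hHpos n).isUnit)]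
  intro n hn x
  obtain ⟨n, rfl⟩ := Nat.exists_eq_add_of_le' hn
  have hcasimir := congrArg (realEval x) (horth.mul_casimirPoly_eq hthree hnorm
    (hermiteForm_loweringOp hne) (hermiteForm_mul_casimirPoly hne) n)
  simpa only [map_add, map_mul, realEval_smul, realEval_casimirPoly, hp, Complex.coe_smul,
    Nat.cast_smul_eq_nsmul, nsmul_one, Nat.cast_succ, add_smul, one_smul, Nat.add_sub_cancel,
    two_smul, ← two_mul, ← add_assoc, sub_add_eq_add_sub, mul_assoc] using hcasimir
end

section
/- Let P(·,n) be the monic MVOPs of the Hermite-type weight W(x) = e^{−x²}L(x)L(x)*. Then for all n ≥ 0 and all indices 1 ≤ j,k ≤ N there exists a constant ξ(n,j,k) ∈ ℂ such that (P(x,n)L(x))_{jk} = ξ(n,j,k) H_{n+j−k}(x) for all x ∈ ℝ when n+j−k ≥ 0, and (P(x,n)L(x))_{jk} = 0 for all x ∈ ℝ when n+j−k < 0; i.e. the entries of Q(x,n) = P(x,n)L(x)e^{−x²/2} are scalar multiples of Hermite functions. -/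
open MeasureTheory Matrix Finset
open scoped ComplexOrder

/-!
The matrix `L` satisfies `L' = A L` and `L'' - 2 x L' = 2 (L J - J L)`. Hence right multiplication
by `L` turns the operator `T f = f'' - 2 x f' + 2 f' A - 2 f J` into `F ↦ F'' - 2 x F' - 2 F J`.
The latter is symmetric for `∫ e^{-x²} F G* dx` because `J` is self-adjoint, so `T` is symmetric for
the weight `e^{-x²} L L*`. Since `T` does not raise degrees, it acts on each monic orthogonal
polynomial as left multiplication by a constant matrix, which its leading coefficient shows to be
`-2 (n + J)`, so `F = P(·,n) L` solves `F'' - 2 x F' = 2 F J - 2 (n + J) F`. As `J` is diagonal, the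
`(j, k)` entry of `F` solves the Hermite equation `q'' - 2 x q' = -2 (n + j - k) q`, whose
polynomial solutions are the multiples of `H_{n+j-k}`, or `0` if the index is negative.

The symmetry and eigenfunction steps use only the two identities for `L`, so they hold in `S[X]` for
any star algebra `S` over `ℝ`, with `X` central and self-adjoint.
-/

section

open Polynomial

section HermiteOperator

variable {R : Type*} [Ring R]

/-- The Hermite differential operator `f ↦ f'' - 2 x f'`, over a possibly noncommutative ring. -/
noncomputable def hermiteOp : R[X] →ₗ[R] R[X] where
  toFun f := derivative (derivative f) - 2 • (X * derivative f)
  map_add' f g := by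
    simp only [map_add, mul_add, smul_add]
    abel
  map_smul' a f := by
    simp only [derivative_smul, RingHom.id_apply]
    rw [smul_eq_C_mul, smul_eq_C_mul, smul_eq_C_mul, mul_sub, mul_smul_comm, ← mul_assoc X, X_mul,
      mul_assoc]

theorem hermiteOp_apply (f : R[X]) :
    hermiteOp f = derivative (derivative f) - 2 • (X * derivative f) :=
  rfl

theorem hermiteOp_mul (f g : R[X]) :
    hermiteOp (f * g) =
      hermiteOp f * g + 2 • (derivative f * derivative g) + f * hermiteOp g := by
  have hX : X * (f * derivative g) = f * (X * derivative g) := (commute_X f).left_comm _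
  simp only [hermiteOp_apply, derivative_mul, map_add, mul_add, sub_mul, mul_sub, hX,
    smul_mul_assoc, mul_smul_comm, mul_assoc]
  abel

theorem hermiteOp_C_mul (a : R) (f : R[X]) : hermiteOp (C a * f) = C a * hermiteOp f := by
  simp only [← smul_eq_C_mul, map_smul]

theorem coeff_hermiteOp (f : R[X]) (d : ℕ) :
    (hermiteOp f).coeff d =
      f.coeff (d + 2) * (d + 2) * (d + 1) - 2 * f.coeff d * d := by
  cases d with
  | zero => simp [hermiteOp_apply, coeff_derivative, one_add_one_eq_two]
  | succ d =>
    simp only [hermiteOp_apply, coeff_sub, coeff_smul, coeff_X_mul, coeff_derivative]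
    push_cast
    noncomm_ring

theorem natDegree_eq_of_hermiteOp_eq_zsmul [NoZeroDivisors R] [CharZero R] {f : R[X]} {m : ℤ}
    (hf : hermiteOp f = (-2 * m) • f) (h0 : f ≠ 0) : (f.natDegree : ℤ) = m := by
  have hlead := congrArg (coeff · f.natDegree) hf
  simp only [coeff_hermiteOp, coeff_smul, coeff_natDegree,
    coeff_eq_zero_of_natDegree_lt (show f.natDegree < f.natDegree + 2 by omega)] at hlead
  have hprod : (2 : R) * (f.leadingCoeff * ((f.natDegree - m : ℤ) : R)) = 0 := by
    rw [zero_mul, zero_mul, zero_sub, zsmul_eq_mul, Int.cast_comm] at hlead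
    push_cast at hlead ⊢
    rw [mul_sub, mul_sub, ← mul_assoc, sub_eq_zero, ← neg_inj, hlead]
    noncomm_ring
  rw [mul_eq_zero_iff_left two_ne_zero] at hprod
  have := (mul_eq_zero.1 hprod).resolve_left (leadingCoeff_ne_zero.2 h0)
  exact sub_eq_zero.1 (Int.cast_eq_zero.1 this)

/-- The operator which `hermiteOp - 2 (· J)` becomes under the substitution `F = f L`, when
`L' = A L` and `L'' - 2 x L' = 2 (L J - J L)`. -/
noncomputable def twistedHermiteOp (A J : R) (f : R[X]) : R[X] :=
  hermiteOp f + 2 • (derivative f * C A) - 2 • (f * C J)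

theorem twistedHermiteOp_mul {A J : R} {L : R[X]} (hL : derivative L = C A * L)
    (hL' : hermiteOp L = 2 • (L * C J - C J * L)) (f : R[X]) :
    twistedHermiteOp A J f * L = hermiteOp (f * L) - 2 • (f * L * C J) := by
  simp only [twistedHermiteOp, hermiteOp_mul, hL, hL', sub_mul, add_mul, mul_sub, smul_sub,
    smul_mul_assoc, mul_smul_comm, mul_assoc]
  abel

theorem coeff_twistedHermiteOp (A J : R) {f : R[X]} {d : ℕ} (hf : f.natDegree ≤ d) :
    (twistedHermiteOp A J f).coeff d = -2 * f.coeff d * (d + J) := by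
  simp only [twistedHermiteOp, coeff_sub, coeff_add, coeff_smul, coeff_hermiteOp, coeff_mul_C,
    coeff_derivative,
    coeff_eq_zero_of_natDegree_lt (show f.natDegree < d + 1 by omega),
    coeff_eq_zero_of_natDegree_lt (show f.natDegree < d + 2 by omega)]
  noncomm_ring

theorem natDegree_twistedHermiteOp_le (A J : R) (f : R[X]) :
    (twistedHermiteOp A J f).natDegree ≤ f.natDegree := by
  refine natDegree_le_iff_coeff_eq_zero.2 fun d hd ↦ ?_
  rw [coeff_twistedHermiteOp A J hd.le, coeff_eq_zero_of_natDegree_lt hd, mul_zero, zero_mul]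

end HermiteOperator

section HermitePolynomials

variable (R : Type*) [CommRing R]

/-- The physicists' Hermite polynomials over a commutative ring (`Polynomial.hermite` is the
probabilists' version), generated by the raising operator `f ↦ 2 x f - f'`; `eval_physHermite`
identifies them with `hermiteF`. -/
noncomputable def physHermite : ℕ → R[X]
  | 0 => 1
  | m + 1 => 2 * X * physHermite m - derivative (physHermite m)

theorem physHermite_succ (m : ℕ) :
    physHermite R (m + 1) = 2 * X * physHermite R m - derivative (physHermite R m) :=
  rfl

theorem derivative_physHermite_succ (m : ℕ) :
    derivative (physHermite R (m + 1)) = 2 * (m + 1) * physHermite R m := by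
  induction m with
  | zero => simp [physHermite]
  | succ m ih =>
    rw [physHermite_succ, derivative_sub, derivative_mul, ih]
    simp only [derivative_mul, derivative_ofNat, derivative_X, derivative_add,
      derivative_natCast, derivative_one]
    push_cast
    linear_combination (-2 * (m + 1)) * physHermite_succ R m

theorem hermiteOp_physHermite (m : ℕ) :
    hermiteOp (physHermite R m) = (-2 * m : ℤ) • physHermite R m := by
  have h := derivative_physHermite_succ R m
  rw [physHermite_succ, derivative_sub, derivative_mul, derivative_mul] at h
  simp only [derivative_ofNat, derivative_X] at h
  simp only [hermiteOp_apply, zsmul_eq_mul, nsmul_eq_mul]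
  push_cast
  linear_combination -h

theorem coeff_physHermite_self [NoZeroDivisors R] [CharZero R] (m : ℕ) :
    (physHermite R m).coeff m = 2 ^ m := by
  induction m with
  | zero => simp [physHermite]
  | succ m ih =>
    have h := congrArg (coeff · m) (derivative_physHermite_succ R m)
    rw [show (2 * (m + 1) : R[X]) = C (2 * (m + 1) : R) by simp [C_ofNat]] at h
    simp only [coeff_derivative, coeff_C_mul, ih] at h
    refine mul_right_cancel₀ (Nat.cast_add_one_ne_zero m) ?_
    rw [h]
    ring

theorem eval_physHermite (m : ℕ) (x : ℝ) :
    (physHermite ℂ m).eval (x : ℂ) = (hermiteF m x : ℂ) := by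
  induction m using Nat.twoStepInduction with
  | zero => simp [physHermite, hermiteF]
  | one => simp [physHermite, hermiteF]
  | more m ih₀ ih₁ =>
    rw [physHermite_succ, derivative_physHermite_succ, hermiteF]
    simp [ih₀, ih₁]

variable {K : Type*} [Field K]

theorem exists_eq_C_mul_physHermite_of_hermiteOp_eq_zsmul [CharZero K] {f : K[X]} {m : ℕ}
    (hf : hermiteOp f = (-2 * m : ℤ) • f) : ∃ a : K, f = C a * physHermite K m := by
  set a := f.coeff m / 2 ^ m
  refine ⟨a, sub_eq_zero.1 ?_⟩
  by_contra hne
  have hdeg := natDegree_eq_of_hermiteOp_eq_zsmul (m := m)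
    (f := f - C a * physHermite K m) (by
      rw [map_sub, hermiteOp_C_mul, hf, hermiteOp_physHermite, mul_smul_comm, smul_sub]) hne
  apply leadingCoeff_ne_zero.2 hne
  rw [leadingCoeff, Int.ofNat_inj.1 hdeg, coeff_sub, coeff_C_mul, coeff_physHermite_self,
    div_mul_cancel₀ _ (pow_ne_zero m two_ne_zero), sub_self]

variable (K) in
/-- `H_m / m!`, extended by `0` to negative `m`, so that the derivative and Hermite-equation
identities hold for all integers without case distinction. -/
noncomputable def hermiteDivFactorial : ℤ → K[X]
  | .ofNat m => C (m.factorial : K)⁻¹ * physHermite K m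
  | .negSucc _ => 0

theorem hermiteDivFactorial_natCast (m : ℕ) :
    hermiteDivFactorial K m = C (m.factorial : K)⁻¹ * physHermite K m :=
  rfl

theorem hermiteDivFactorial_of_neg {m : ℤ} (hm : m < 0) : hermiteDivFactorial K m = 0 := by
  cases m with
  | ofNat m => exact absurd hm (Int.not_lt.2 (Int.natCast_nonneg m))
  | negSucc m => rfl

theorem derivative_hermiteDivFactorial [CharZero K] (m : ℤ) :
    derivative (hermiteDivFactorial K m) = 2 * hermiteDivFactorial K (m - 1) := by
  obtain hm | rfl | ⟨m, rfl⟩ : m < 0 ∨ m = 0 ∨ ∃ k : ℕ, m = k + 1 := by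
    rcases lt_trichotomy m 0 with hneg | hzero | hpos
    · exact .inl hneg
    · exact .inr (.inl hzero)
    · exact .inr (.inr ⟨(m - 1).toNat, by omega⟩)
  · rw [hermiteDivFactorial_of_neg hm, hermiteDivFactorial_of_neg (by omega)]
    simp
  · rw [hermiteDivFactorial_of_neg (m := 0 - 1) (by omega)]
    change derivative (C (Nat.factorial 0 : K)⁻¹ * physHermite K 0) = 2 * 0
    simp [physHermite]
  · rw [add_sub_cancel_right]
    change derivative (C ((m + 1).factorial : K)⁻¹ * physHermite K (m + 1)) =
      2 * (C (m.factorial : K)⁻¹ * physHermite K m)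
    have hfac : C (m.factorial : K)⁻¹ = C ((m + 1).factorial : K)⁻¹ * (m + 1 : K[X]) := by
      rw [← C_eq_natCast, ← C_1, ← C_add, ← C_mul, Nat.factorial_succ]
      congr 1
      have := Nat.cast_add_one_ne_zero (R := K) m
      push_cast
      field_simp
    rw [derivative_C_mul, derivative_physHermite_succ, hfac]
    ring

theorem hermiteOp_hermiteDivFactorial (m : ℤ) :
    hermiteOp (hermiteDivFactorial K m) = (-2 * m) • hermiteDivFactorial K m := by
  cases m with
  | ofNat m =>
    simp only [hermiteDivFactorial, hermiteOp_C_mul, hermiteOp_physHermite, mul_smul_comm]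
    rfl
  | negSucc m => simp [hermiteDivFactorial]

end HermitePolynomials

section OrthogonalSequence

variable {S : Type*} [Ring S] {p : Polynomial.Sequence S} {B : S[X] → S[X] →ₗ[S] S}

theorem coeff_self_of_monic (hp : ∀ n, (p n).Monic) (n : ℕ) : (p n).coeff n = 1 := by
  simpa using (hp n).coeff_natDegree

theorem form_apply_eq_coeff_mul (hp : ∀ n, (p n).Monic)
    (horth : ∀ m n, m ≠ n → B (p m) (p n) = 0) {f : S[X]} {n : ℕ} (hf : f.natDegree ≤ n) :
    B (p n) f = f.coeff n * B (p n) (p n) := by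
  have hlower : degreeLT S n ≤ LinearMap.ker (B (p n)) := by
    rw [← p.span_degreeLT fun i _ ↦ (hp i).leadingCoeff ▸ isUnit_one, Submodule.span_le]
    rintro _ ⟨m, hm, rfl⟩
    exact horth n m hm.ne'
  have hmem : f - f.coeff n • p n ∈ degreeLT S n := by
    rw [mem_degreeLT, degree_lt_iff_coeff_zero]
    intro d hd
    rw [coeff_sub, coeff_smul, smul_eq_mul]
    rcases hd.eq_or_lt with rfl | hd
    · rw [coeff_self_of_monic hp, mul_one, sub_self]
    · rw [coeff_eq_zero_of_natDegree_lt (hf.trans_lt hd),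
        coeff_eq_zero_of_natDegree_lt ((p.natDegree_eq n).trans_lt hd),
        mul_zero, sub_zero]
  simpa [sub_eq_zero] using hlower hmem

theorem eq_C_coeff_mul_of_symmetric (hp : ∀ n, (p n).Monic)
    (horth : ∀ m n, m ≠ n → B (p m) (p n) = 0) (hunit : ∀ n, IsUnit (B (p n) (p n)))
    (hrefl : ∀ f g, B f g = 0 → B g f = 0) {T : S[X] → S[X]}
    (hT : ∀ f, (T f).natDegree ≤ f.natDegree) (hsymm : ∀ f g, B g (T f) = B (T g) f) (n : ℕ) :
    T (p n) = C ((T (p n)).coeff n) * p n := by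
  have hdeg : ∀ m, (T (p m)).natDegree ≤ m := fun m ↦ (hT _).trans (p.natDegree_eq m).le
  set a := (T (p n)).coeff n
  by_contra hne
  have hne' := sub_ne_zero.2 hne
  set r := T (p n) - C a * p n
  set m := r.natDegree
  have hrn : r.coeff n = 0 := by
    rw [coeff_sub, coeff_C_mul, coeff_self_of_monic hp, mul_one, sub_self]
  have hm : m < n := by
    refine lt_of_le_of_ne ((natDegree_sub_le_of_le (hdeg n) ?_).trans (max_self n).le) fun h ↦ ?_
    · exact (natDegree_C_mul_le _ _).trans (p.natDegree_eq n).le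
    · exact leadingCoeff_ne_zero.2 hne' (by rwa [← h] at hrn)
  have hTorth : B (p m) (T (p n)) = 0 := by
    rw [hsymm]
    apply hrefl
    rw [form_apply_eq_coeff_mul hp horth ((hdeg m).trans hm.le),
      coeff_eq_zero_of_natDegree_lt ((hdeg m).trans_lt hm), zero_mul]
  have hr : B (p m) r = 0 := by
    rw [map_sub, hTorth, ← smul_eq_C_mul, map_smul, horth m n hm.ne, smul_zero, sub_zero]
  rw [form_apply_eq_coeff_mul hp horth le_rfl, (hunit m).mul_left_eq_zero] at hr
  exact leadingCoeff_ne_zero.2 hne' hr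

end OrthogonalSequence

section PolynomialStar

variable {S : Type*} [Ring S] [StarRing S]

/-- The coefficientwise star on `S[X]`, for which `X` is self-adjoint. -/
noncomputable instance polynomialStar : Star S[X] where
  star f := ((opRingEquiv S).symm (f.map (starRingEquiv (R := S) : S →+* Sᵐᵒᵖ))).unop

theorem coeff_star (f : S[X]) (d : ℕ) : (star f).coeff d = star (f.coeff d) := by
  apply MulOpposite.op_injective
  rw [star, polynomialStar, ← coeff_opRingEquiv, RingEquiv.apply_symm_apply, coeff_map]
  rfl

noncomputable instance polynomialStarRing : StarRing S[X] where
  star_involutive f := by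
    ext d
    rw [coeff_star, coeff_star, star_star]
  star_mul f g := by simp [star]
  star_add f g := by simp [star]

theorem star_monomial (k : ℕ) (a : S) : star (monomial k a : S[X]) = monomial k (star a) := by
  ext d
  rw [coeff_star, coeff_monomial, coeff_monomial, apply_ite star, star_zero]

theorem star_C (a : S) : star (C a : S[X]) = C (star a) :=
  star_monomial 0 a

theorem star_derivative (f : S[X]) : star (derivative f) = derivative (star f) := by
  ext d
  simp only [coeff_star, coeff_derivative, star_mul, star_add, star_natCast, star_one]
  rw [← Nat.cast_succ, Nat.cast_comm]

theorem star_hermiteOp (f : S[X]) : star (hermiteOp f) = hermiteOp (star f) := by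
  have hX : star (X : S[X]) = X := by rw [← monomial_one_one_eq_X, star_monomial, star_one]
  simp only [hermiteOp_apply, star_sub, star_nsmul, star_mul, star_derivative, hX, X_mul]

end PolynomialStar

section GaussianFunctional

/-- The `k`-th moment of `e^{-x²}` on the real line. -/
noncomputable def gaussianMoment (k : ℕ) : ℝ :=
  ∫ x : ℝ, Real.exp (-x ^ 2) * x ^ k

theorem integrable_exp_neg_sq_mul_pow (k : ℕ) :
    Integrable fun x : ℝ ↦ Real.exp (-x ^ 2) * x ^ k := by
  have hk : (-1 : ℝ) < k := by linarith [k.cast_nonneg (α := ℝ)]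
  simpa [mul_comm] using integrable_rpow_mul_exp_neg_mul_sq one_pos hk

theorem two_mul_gaussianMoment_succ (k : ℕ) :
    2 * gaussianMoment (k + 1) = k * gaussianMoment (k - 1) := by
  have hderiv (x : ℝ) : HasDerivAt (fun x ↦ Real.exp (-x ^ 2) * x ^ k)
      (k * (Real.exp (-x ^ 2) * x ^ (k - 1)) - 2 * (Real.exp (-x ^ 2) * x ^ (k + 1))) x := by
    refine (((hasDerivAt_pow 2 x).fun_neg.exp).mul (hasDerivAt_pow k x)).congr_deriv ?_
    push_cast
    ring
  have hlow := (integrable_exp_neg_sq_mul_pow (k - 1)).const_mul (k : ℝ)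
  have hhigh := (integrable_exp_neg_sq_mul_pow (k + 1)).const_mul 2
  have hzero := integral_eq_zero_of_hasDerivAt_of_integrable hderiv (hlow.sub hhigh)
    (integrable_exp_neg_sq_mul_pow k)
  rw [integral_sub hlow hhigh, integral_const_mul, integral_const_mul, sub_eq_zero] at hzero
  exact hzero.symm

variable {S : Type*} [Ring S] [Algebra ℝ S]

/-- The functional `F ↦ ∫ e^{-x²} F(x) dx` on polynomials, given by the moments of `e^{-x²}` so
that no topology on the coefficients is needed. -/
noncomputable def gaussianIntegral : S[X] →ₗ[S] S :=
  lsum fun k ↦ gaussianMoment k • LinearMap.id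

theorem gaussianIntegral_monomial (k : ℕ) (a : S) :
    gaussianIntegral (monomial k a) = gaussianMoment k • a := by
  simp [gaussianIntegral, sum_monomial_index]

theorem gaussianIntegral_derivative (f : S[X]) :
    gaussianIntegral (derivative f) = 2 • gaussianIntegral (X * f) := by
  induction f using Polynomial.induction_on' with
  | add f g hf hg => simp only [mul_add, map_add, smul_add, hf, hg]
  | monomial k a =>
    rw [X_mul_monomial, derivative_monomial, gaussianIntegral_monomial, gaussianIntegral_monomial,
      ← Nat.cast_comm, ← nsmul_eq_mul, smul_comm, ← Nat.cast_smul_eq_nsmul ℝ, smul_smul,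
      ← Nat.cast_smul_eq_nsmul ℝ 2, smul_smul]
    exact congrArg (· • a) (two_mul_gaussianMoment_succ k).symm

theorem gaussianIntegral_hermiteOp_mul (f g : S[X]) :
    gaussianIntegral (hermiteOp f * g) = gaussianIntegral (f * hermiteOp g) := by
  have hX : X * (f * derivative g) = f * (X * derivative g) := (commute_X f).left_comm _
  have hf := gaussianIntegral_derivative (derivative f * g)
  have hg := gaussianIntegral_derivative (f * derivative g)
  simp only [derivative_mul, map_add, hX, ← mul_assoc] at hf hg
  simp only [hermiteOp_apply, sub_mul, mul_sub, smul_mul_assoc, mul_smul_comm, map_sub, map_nsmul,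
    ← mul_assoc, ← hf, ← hg]
  abel

variable [StarRing S]

theorem gaussianIntegral_star [StarModule ℝ S] (f : S[X]) :
    gaussianIntegral (star f) = star (gaussianIntegral f) := by
  induction f using Polynomial.induction_on' with
  | add f g hf hg => simp only [star_add, map_add, hf, hg]
  | monomial k a => simp [star_monomial, gaussianIntegral_monomial]

/-- The inner product `⟨f, g⟩ = ∫ e^{-x²} (f L)(x) (g L)(x)* dx` attached to the weight
`e^{-x²} L L*`, linear in `f`; note the order of the arguments. -/
noncomputable def gaussianForm (L g : S[X]) : S[X] →ₗ[S] S where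
  toFun f := gaussianIntegral (f * L * star (g * L))
  map_add' f h := by simp only [add_mul, map_add]
  map_smul' a f := by simp only [smul_mul_assoc, map_smul, RingHom.id_apply]

theorem gaussianForm_apply (L f g : S[X]) :
    gaussianForm L g f = gaussianIntegral (f * L * star (g * L)) :=
  rfl

theorem star_gaussianForm [StarModule ℝ S] (L f g : S[X]) :
    star (gaussianForm L g f) = gaussianForm L f g := by
  rw [gaussianForm_apply, gaussianForm_apply, ← gaussianIntegral_star, star_mul, star_star]

theorem gaussianForm_twistedHermiteOp {A J : S} {L : S[X]} (hJ : IsSelfAdjoint J)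
    (hL : derivative L = C A * L) (hL' : hermiteOp L = 2 • (L * C J - C J * L)) (f g : S[X]) :
    gaussianForm L g (twistedHermiteOp A J f) = gaussianForm L (twistedHermiteOp A J g) f := by
  simp only [gaussianForm_apply, twistedHermiteOp_mul hL hL', sub_mul, star_sub, mul_sub, map_sub,
    star_hermiteOp, gaussianIntegral_hermiteOp_mul, star_mul, star_nsmul, star_C, hJ.star_eq,
    smul_mul_assoc, mul_smul_comm, mul_assoc]

end GaussianFunctional

theorem hermiteOp_mul_of_orthogonal {S : Type*} [Ring S] [Algebra ℝ S] [StarRing S]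
    [StarModule ℝ S] {A J : S} {L : S[X]} (hJ : IsSelfAdjoint J) (hL : derivative L = C A * L)
    (hL' : hermiteOp L = 2 • (L * C J - C J * L)) {p : Polynomial.Sequence S}
    (hp : ∀ n, (p n).Monic) (horth : ∀ m n, m ≠ n → gaussianForm L (p m) (p n) = 0)
    (hunit : ∀ n, IsUnit (gaussianForm L (p n) (p n))) (n : ℕ) :
    hermiteOp (p n * L) = 2 • (p n * L * C J - C (n + J) * (p n * L)) := by
  have heigen := eq_C_coeff_mul_of_symmetric hp horth hunit
    (fun f g h ↦ by rw [← star_gaussianForm, h, star_zero])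
    (natDegree_twistedHermiteOp_le A J) (gaussianForm_twistedHermiteOp hJ hL hL') n
  rw [coeff_twistedHermiteOp A J (p.natDegree_eq n).le, coeff_self_of_monic hp, mul_one] at heigen
  have htwist := twistedHermiteOp_mul hL hL' (p n)
  rw [heigen, eq_sub_iff_add_eq] at htwist
  rw [← htwist]
  simp only [map_mul, map_neg, C_ofNat, smul_sub, ← mul_assoc, two_nsmul]
  noncomm_ring

section ScalarEvaluation

variable {S : Type*} [Ring S] [Algebra ℝ S]

/-- Evaluation of a polynomial over a noncommutative `ℝ`-algebra at a real point, which is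
multiplicative because real scalars are central. -/
noncomputable def evalReal (x : ℝ) : S[X] →+* S :=
  eval₂RingHom' (RingHom.id S) (algebraMap ℝ S x) fun a ↦ (Algebra.commutes x a).symm

theorem evalReal_monomial (x : ℝ) (k : ℕ) (a : S) :
    evalReal x (monomial k a) = x ^ k • a := by
  change eval₂ (RingHom.id S) (algebraMap ℝ S x) (monomial k a) = x ^ k • a
  rw [eval₂_monomial, RingHom.id_apply, ← map_pow, ← Algebra.commutes, ← Algebra.smul_def]

theorem evalReal_star [StarRing S] [StarModule ℝ S] (x : ℝ) (f : S[X]) :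
    evalReal x (star f) = star (evalReal x f) := by
  induction f using Polynomial.induction_on' with
  | add f g hf hg => simp only [star_add, map_add, hf, hg]
  | monomial k a => simp [star_monomial, evalReal_monomial]

end ScalarEvaluation

section MatrixPolynomials

theorem matPolyEquiv_symm_derivative_apply {n R : Type*} [CommRing R] [DecidableEq n] [Fintype n]
    (F : (Matrix n n R)[X]) (i j : n) :
    matPolyEquiv.symm (derivative F) i j = derivative (matPolyEquiv.symm F i j) := by
  ext d
  rw [matPolyEquiv_symm_apply_coeff, coeff_derivative, coeff_derivative,
    matPolyEquiv_symm_apply_coeff, ← Nat.cast_succ, ← Nat.cast_succ, ← Nat.cast_comm,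
    ← nsmul_eq_mul, Matrix.smul_apply, nsmul_eq_mul, Nat.cast_comm]

theorem matPolyEquiv_symm_hermiteOp_apply {n R : Type*} [CommRing R] [DecidableEq n] [Fintype n]
    (F : (Matrix n n R)[X]) (i j : n) :
    matPolyEquiv.symm (hermiteOp F) i j = hermiteOp (matPolyEquiv.symm F i j) := by
  rw [hermiteOp_apply, hermiteOp_apply, map_sub, map_nsmul, map_mul, matPolyEquiv_symm_X,
    Matrix.sub_apply, Matrix.smul_apply, Matrix.diagonal_mul, matPolyEquiv_symm_derivative_apply,
    matPolyEquiv_symm_derivative_apply]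

variable {N : ℕ}

theorem evalReal_apply (x : ℝ) (F : (Matrix (Fin N) (Fin N) ℂ)[X]) (i j : Fin N) :
    evalReal x F i j = (matPolyEquiv.symm F i j).eval (x : ℂ) := by
  rw [← matPolyEquiv_eval, AlgEquiv.apply_symm_apply]
  rfl

theorem matInt_exp_smul_evalReal (F : (Matrix (Fin N) (Fin N) ℂ)[X]) :
    matInt N (fun x ↦ Real.exp (-x ^ 2) • evalReal x F) = gaussianIntegral F := by
  have heval (x : ℝ) (i j : Fin N) : (Real.exp (-x ^ 2) • evalReal x F) i j =
      ∑ k ∈ F.support, ((Real.exp (-x ^ 2) * x ^ k : ℝ) : ℂ) * F.coeff k i j := by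
    conv_lhs => rw [F.as_sum_support, map_sum, smul_sum, Matrix.sum_apply]
    simp only [evalReal_monomial, Matrix.smul_apply, Complex.real_smul, ← mul_assoc,
      ← Complex.ofReal_mul]
  ext i j
  simp only [matInt, Matrix.of_apply, heval]
  rw [integral_finsetSum _ fun k _ ↦ (integrable_exp_neg_sq_mul_pow k).ofReal.mul_const _]
  conv_rhs => rw [F.as_sum_support, map_sum, Matrix.sum_apply]
  simp only [integral_mul_const, integral_complex_ofReal, gaussianIntegral_monomial,
    Matrix.smul_apply, Complex.real_smul, gaussianMoment]

theorem IsMonicMatPoly.exists_monic_evalReal [NeZero N] {n : ℕ}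
    {F : ℝ → Matrix (Fin N) (Fin N) ℂ} (hF : IsMonicMatPoly N n F) :
    ∃ p : (Matrix (Fin N) (Fin N) ℂ)[X],
      p.Monic ∧ p.degree = n ∧ (fun x ↦ evalReal x p) = F := by
  obtain ⟨c, hc, hF⟩ := hF
  set p : (Matrix (Fin N) (Fin N) ℂ)[X] := ∑ k ∈ range (n + 1), monomial k (c k)
  have hcoeff : p.coeff n = 1 := by
    simp [p, coeff_monomial, hc]
  have hdeg : p.degree ≤ n := (degree_sum_le _ _).trans <| Finset.sup_le fun k hk ↦
    (degree_monomial_le k _).trans <| Nat.cast_le.2 (Nat.lt_succ_iff.1 (mem_range.1 hk))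
  refine ⟨p, monic_of_degree_le n hdeg hcoeff, hdeg.antisymm (le_degree_of_ne_zero ?_), ?_⟩
  · rw [hcoeff]
    exact one_ne_zero
  · ext1 x
    simp only [p, hF, map_sum, evalReal_monomial, ← Complex.ofReal_pow, Complex.coe_smul]

theorem exists_sequence_evalReal [NeZero N] {P : ℕ → ℝ → Matrix (Fin N) (Fin N) ℂ}
    (hP : ∀ n, IsMonicMatPoly N n (P n)) :
    ∃ p : Polynomial.Sequence (Matrix (Fin N) (Fin N) ℂ),
      (∀ n, (p n).Monic) ∧ P = fun n x ↦ evalReal x (p n) := by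
  choose p hmonic hdeg heval using fun n ↦ (hP n).exists_monic_evalReal
  exact ⟨⟨p, hdeg⟩, hmonic, funext fun n ↦ (heval n).symm⟩

/-- The matrix polynomial underlying `Lmat`; the convention that `hermiteDivFactorial` vanishes at
negative integers encodes its triangularity. -/
noncomputable def hermiteL (α : Fin N → ℝ) : (Matrix (Fin N) (Fin N) ℂ)[X] :=
  matPolyEquiv (Matrix.of fun j k ↦
    C (α j / α k : ℂ) * hermiteDivFactorial ℂ ((j : ℤ) - (k : ℤ)))

theorem matPolyEquiv_symm_hermiteL_apply (α : Fin N → ℝ) (j k : Fin N) :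
    matPolyEquiv.symm (hermiteL α) j k =
      C (α j / α k : ℂ) * hermiteDivFactorial ℂ ((j : ℤ) - (k : ℤ)) := by
  rw [hermiteL, AlgEquiv.symm_apply_apply, of_apply]

theorem evalReal_hermiteL (α : Fin N → ℝ) (x : ℝ) : evalReal x (hermiteL α) = Lmat N α x := by
  ext j k
  rw [evalReal_apply, matPolyEquiv_symm_hermiteL_apply, Lmat, of_apply]
  split_ifs with h
  · rw [← Int.ofNat_sub h, hermiteDivFactorial_natCast, eval_mul, eval_mul, eval_C, eval_C,
      eval_physHermite]
    push_cast
    ring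
  · rw [hermiteDivFactorial_of_neg (by omega), mul_zero, eval_zero]

theorem matIP_hermW (α : Fin N → ℝ) (f g : (Matrix (Fin N) (Fin N) ℂ)[X]) :
    matIP N (hermW N α) (fun x ↦ evalReal x f) (fun x ↦ evalReal x g) =
      gaussianForm (hermiteL α) g f := by
  rw [gaussianForm_apply, ← matInt_exp_smul_evalReal, matIP]
  congr 1
  ext1 x
  rw [hermW, map_mul, evalReal_star, map_mul, map_mul, evalReal_hermiteL, star_eq_conjTranspose,
    conjTranspose_mul]
  simp only [Matrix.mul_smul, Matrix.smul_mul, Matrix.mul_assoc]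

theorem derivative_hermiteL {α : Fin N → ℝ} (hα : ∀ j, α j ≠ 0) :
    derivative (hermiteL α) = C (Amat N α) * hermiteL α := by
  apply matPolyEquiv.symm.injective
  ext1 j k
  simp only [matPolyEquiv_symm_derivative_apply, map_mul, matPolyEquiv_symm_C, Matrix.mul_apply,
    map_apply, matPolyEquiv_symm_hermiteL_apply, derivative_C_mul, derivative_hermiteDivFactorial]
  rcases Nat.eq_zero_or_pos (j : ℕ) with hj | hj
  · rw [hermiteDivFactorial_of_neg (by omega), mul_zero, mul_zero,
      Finset.sum_eq_zero fun l _ ↦ ?_]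
    rw [Amat, of_apply, if_neg (by omega), C_0, zero_mul]
  · obtain ⟨l, hl⟩ : ∃ l : Fin N, (j : ℕ) = l + 1 :=
      ⟨⟨j - 1, by omega⟩, (Nat.sub_add_cancel hj).symm⟩
    rw [Finset.sum_eq_single_of_mem l (Finset.mem_univ l) fun i _ hi ↦ ?_]
    · have hαl : (α l : ℂ) ≠ 0 := Complex.ofReal_ne_zero.2 (hα l)
      have hcoeff : (Amat N α j l * (α l / α k) : ℂ) = α j / α k * 2 := by
        rw [Amat, of_apply, if_pos hl]
        push_cast
        field_simp
      rw [← mul_assoc, ← mul_assoc, ← C_mul, hcoeff, C_mul, C_ofNat,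
        show (j : ℤ) - k - 1 = l - k by omega]
    · rw [Amat, of_apply, if_neg fun h ↦ hi (Fin.ext (by omega)), C_0, zero_mul]

theorem hermiteOp_hermiteL (α : Fin N → ℝ) :
    hermiteOp (hermiteL α) = 2 • (hermiteL α * C (Jmat N) - C (Jmat N) * hermiteL α) := by
  apply matPolyEquiv.symm.injective
  ext1 j k
  simp only [matPolyEquiv_symm_hermiteOp_apply, map_nsmul, map_sub, map_mul, matPolyEquiv_symm_C,
    Jmat, Matrix.diagonal_map, Matrix.mul_diagonal, Matrix.diagonal_mul, map_zero,
    Matrix.smul_apply, Matrix.sub_apply, matPolyEquiv_symm_hermiteL_apply, hermiteOp_C_mul,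
    hermiteOp_hermiteDivFactorial]
  simp only [zsmul_eq_mul, nsmul_eq_mul, C_add, C_1, C_eq_natCast]
  push_cast
  ring

theorem isSelfAdjoint_Jmat (N : ℕ) : IsSelfAdjoint (Jmat N) := by
  rw [IsSelfAdjoint, Jmat, star_eq_conjTranspose, diagonal_conjTranspose]
  congr 1
  ext j
  simp

theorem hermiteOp_entry_eq_zsmul {f : (Matrix (Fin N) (Fin N) ℂ)[X]} {n : ℕ}
    (hf : hermiteOp f = 2 • (f * C (Jmat N) - C (n + Jmat N) * f)) (j k : Fin N) :
    hermiteOp (matPolyEquiv.symm f j k) =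
      (-2 * (n + j - k : ℤ)) • matPolyEquiv.symm f j k := by
  have hnJ : (n : Matrix (Fin N) (Fin N) ℂ) + Jmat N =
      diagonal fun i : Fin N ↦ (n + ((i : ℕ) + 1) : ℂ) := by
    rw [Jmat, ← diagonal_natCast, diagonal_add]
  have hentry := congrArg (matPolyEquiv.symm · j k) hf
  rw [hnJ, Jmat] at hentry
  simp only [matPolyEquiv_symm_hermiteOp_apply, map_nsmul, map_sub, map_mul,
    matPolyEquiv_symm_C, Matrix.diagonal_map, Matrix.mul_diagonal, Matrix.diagonal_mul, map_zero,
    Matrix.smul_apply, Matrix.sub_apply] at hentry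
  rw [hentry]
  simp only [zsmul_eq_mul, nsmul_eq_mul, C_add, C_1, C_eq_natCast]
  push_cast
  ring

end MatrixPolynomials

theorem hermite_Q_entries_general {N : ℕ} (α : Fin N → ℝ) (hα : ∀ j, α j ≠ 0)
    (P : ℕ → ℝ → Matrix (Fin N) (Fin N) ℂ)
    (hPmonic : ∀ n, IsMonicMatPoly N n (P n))
    (hPorth : ∀ n m, n ≠ m → matIP N (hermW N α) (P n) (P m) = 0)
    (hunit : ∀ n, IsUnit (matIP N (hermW N α) (P n) (P n))) (n : ℕ) (j k : Fin N) :
    if (k : ℕ) ≤ n + (j : ℕ) then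
      ∃ ξ : ℂ, ∀ x : ℝ,
        (P n x * Lmat N α x) j k = ξ * ((hermiteF (n + (j : ℕ) - (k : ℕ)) x : ℝ) : ℂ)
    else
      ∀ x : ℝ, (P n x * Lmat N α x) j k = 0 := by
  have : NeZero N := ⟨j.pos.ne'⟩
  obtain ⟨p, hmonic, rfl⟩ := exists_sequence_evalReal hPmonic
  simp only [matIP_hermW] at hPorth hunit
  have hode := hermiteOp_entry_eq_zsmul (hermiteOp_mul_of_orthogonal (isSelfAdjoint_Jmat N)
    (derivative_hermiteL hα) (hermiteOp_hermiteL α) hmonic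
    (fun m n h ↦ hPorth n m h.symm) hunit n) j k
  set q := matPolyEquiv.symm (p n * hermiteL α) j k
  have hq (x : ℝ) : (evalReal x (p n) * Lmat N α x) j k = q.eval (x : ℂ) := by
    rw [← evalReal_hermiteL, ← map_mul, evalReal_apply]
  simp only [hq]
  split_ifs with hk
  · have hdeg : ((n + j - k : ℕ) : ℤ) = n + j - k := by omega
    obtain ⟨ξ, hξ⟩ := exists_eq_C_mul_physHermite_of_hermiteOp_eq_zsmul (hdeg ▸ hode)
    exact ⟨ξ, fun x ↦ by rw [hξ, eval_mul, eval_C, eval_physHermite]⟩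
  · have hzero : q = 0 := by
      by_contra hne
      have := natDegree_eq_of_hermiteOp_eq_zsmul hode hne
      omega
    simp [hzero]

end

/-- **Entries of `P(x,n)L(x)` are multiples of Hermite polynomials**
(Proposition 5.13 of the paper): for the Hermite-type weight,
`(P(x,n)L(x))_{jk} = ξ(n,j,k) H_{n+j−k}(x)` if `n+j−k ≥ 0`, and `0` otherwise;
equivalently the entries of `Q(x,n) = P(x,n)L(x)e^{−x²/2}` are scalar multiples
of Hermite functions. -/
theorem hermite_Q_entries
    (N : ℕ) (hN : 1 ≤ N) (α : Fin N → ℝ) (hα : ∀ j, 0 < α j)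
    (P : ℕ → ℝ → Matrix (Fin N) (Fin N) ℂ)
    (hPmonic : ∀ n, IsMonicMatPoly N n (P n))
    (hPorth : ∀ n m, n ≠ m → matIP N (hermW N α) (P n) (P m) = 0)
    (hHpos : ∀ n, (matIP N (hermW N α) (P n) (P n)).PosDef)
    :
    ∀ (n : ℕ) (j k : Fin N),
      (if (k : ℕ) ≤ n + (j : ℕ) then
        ∃ ξ : ℂ, ∀ x : ℝ,
          (P n x * Lmat N α x) j k =
            ξ * ((hermiteF (n + (j : ℕ) - (k : ℕ)) x : ℝ) : ℂ)
      else
        ∀ x : ℝ, (P n x * Lmat N α x) j k = 0) :=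
  hermite_Q_entries_general α (fun j ↦ (hα j).ne') P hPmonic hPorth fun n ↦ (hHpos n).isUnit
end
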